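/- Fix an integer r ≥ 2. Let (n_k) and (N_k) be sequences of positive integers with n_k → ∞ and N_k → ∞, and set α_k := n_k/N_k and p_{r,k} := α_k^r e^{-α_k}/r!. If α_k → 0 and N_k·p_{r,k} → 0 as k → ∞, then lim_{k→∞} ℙ(μ_r(n_k, N_k) = 1)/(N_k·p_{r,k}) = 1. -/

import Mathlib

open MeasureTheory Finset Filter

/-- The law of `n` balls placed independently and uniformly at random into `N` boxes. -/
noncomputable def ballsInBoxes (n N : ℕ) : Measure (Fin n → Fin N) :=
  Measure.pi fun _ : Fin n => ((N : ENNReal)⁻¹ • (Measure.count : Measure (Fin N)))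

/-- `ℙ(μ_r(n,N) = k)`, the probability that exactly `k` of the `N` boxes contain exactly `r`
of the `n` balls. -/
noncomputable def boxCountProb (n N r k : ℕ) : ℝ :=
  ((ballsInBoxes n N) {X : Fin n → Fin N |
      (Finset.univ.filter fun i : Fin N =>
        (Finset.univ.filter fun s : Fin n => X s = i).card = r).card = k}).toReal

/-!
By Bonferroni's inequalities `ℙ(μ_r = 1)` differs from the mean `E = 𝔼 μ_r` by at most
`∑_{i ≠ j} ℙ(boxes i and j both contain exactly r balls)`. Since `1 - 2/N ≤ (1 - 1/N)²`, each of
these probabilities is at most `(1 - 1/N)^(-2r) ≤ 4^r` times what it would be for independent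
boxes, so the error is at most `4^r E² = o(E)` once `E → 0`.

It remains to compare `E = N (n choose r) N^(-r) (1 - 1/N)^(n - r)` with `N p_r`. Raising
`1 - x² ≤ (1 - x) e^x ≤ 1` to the `n`-th power at `x = 1/N` gives
`1 - n/N² ≤ (1 - 1/N)^n e^(n/N) ≤ 1`, so the two agree to first order in the whole range
`n/N² → 0`, which contains `n/N → 0`.
-/

open Asymptotics Topology

section ExactlyOne

variable {Ω ι : Type*} [MeasurableSpace Ω] [Fintype ι] (μ : Measure Ω) [IsFiniteMeasure μ]
  (A : ι → Set Ω)

lemma measureReal_existsUnique_mem_le : μ.real {ω | ∃! i, ω ∈ A i} ≤ ∑ i, μ.real (A i) := by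
  refine le_trans (measureReal_mono ?_) (measureReal_iUnion_fintype_le A)
  exact fun ω hω => Set.mem_iUnion.2 hω.exists

variable [DecidableEq ι] {A}

lemma sum_measureReal_le_existsUnique_mem_add (hA : ∀ i, MeasurableSet (A i)) :
    ∑ i, μ.real (A i) ≤
      μ.real {ω | ∃! i, ω ∈ A i} + ∑ i, ∑ j ∈ {i}ᶜ, μ.real (A i ∩ A j) := by
  let onlyIn (i : ι) : Set Ω := A i \ ⋃ j ∈ ({i}ᶜ : Finset ι), A j
  have existsUnique_eq : {ω | ∃! i, ω ∈ A i} = ⋃ i, onlyIn i := by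
    ext ω
    simp only [onlyIn, ExistsUnique, Set.mem_ofPred_eq, Set.mem_iUnion, Set.mem_sdiff,
      Finset.mem_compl, Finset.mem_singleton, exists_prop, not_exists, not_and, not_imp_not]
  have onlyIn_disjoint : Pairwise (Function.onFun Disjoint onlyIn) := by
    intro i j hij
    refine Set.disjoint_left.2 fun ω hi hj => hi.2 (Set.mem_biUnion (x := j) ?_ hj.1)
    simpa using hij.symm
  have onlyIn_measurable (i : ι) : MeasurableSet (onlyIn i) :=
    (hA i).diff (Finset.measurableSet_biUnion _ fun j _ => hA j)
  rw [existsUnique_eq, measureReal_iUnion_fintype onlyIn_disjoint onlyIn_measurable,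
    ← Finset.sum_add_distrib]
  refine Finset.sum_le_sum fun i _ => ?_
  calc μ.real (A i)
      ≤ μ.real (onlyIn i ∪ ⋃ j ∈ ({i}ᶜ : Finset ι), A i ∩ A j) := by
        refine measureReal_mono fun ω hω => ?_
        rw [← Set.inter_iUnion₂]
        exact (em (ω ∈ ⋃ j ∈ ({i}ᶜ : Finset ι), A j)).symm.imp (⟨hω, ·⟩) (⟨hω, ·⟩)
    _ ≤ μ.real (onlyIn i) + ∑ j ∈ {i}ᶜ, μ.real (A i ∩ A j) :=
        (measureReal_union_le _ _).trans (by gcongr; exact measureReal_biUnion_finset_le _ _)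

end ExactlyOne

section Trinomial

variable {α ι : Type*} [DecidableEq ι] {S T : Set α} {A B : Finset ι}

lemma setOf_preimage_eq_and_preimage_eq (hST : Disjoint S T) (hAB : Disjoint A B) :
    {X : ι → α | X ⁻¹' S = A ∧ X ⁻¹' T = B} =
      Set.univ.pi fun s => if s ∈ A then S else if s ∈ B then T else (S ∪ T)ᶜ := by
  ext X
  simp only [Set.ext_iff, Set.mem_ofPred_eq, ← forall_and, Set.mem_univ_pi, Set.mem_preimage,
    Finset.mem_coe]
  refine forall_congr' fun s => ?_
  have hS : X s ∈ S → X s ∉ T := fun h => Set.disjoint_left.1 hST h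
  have hA : s ∈ A → s ∉ B := fun h => Finset.disjoint_left.1 hAB h
  split_ifs
  · tauto
  · tauto
  · rw [Set.mem_compl_iff, Set.mem_union]
    tauto

variable [Fintype ι]

variable (ι) in
/-- The pairs of disjoint subsets of `ι` of sizes `r` and `q`: the possible sets of trials
contributing the outcomes counted by the first two classes of a trinomial law. -/
def disjointPairs (r q : ℕ) : Finset (Σ _ : Finset ι, Finset ι) :=
  (powersetCard r univ).sigma fun A => powersetCard q Aᶜ

lemma mem_disjointPairs {r q : ℕ} {p : Σ _ : Finset ι, Finset ι} :
    p ∈ disjointPairs ι r q ↔ #p.1 = r ∧ #p.2 = q ∧ Disjoint p.1 p.2 := by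
  simp only [disjointPairs, Finset.mem_sigma, Finset.mem_powersetCard, Finset.subset_univ, true_and,
    Finset.subset_compl_iff_disjoint_left, and_comm]

lemma card_disjointPairs (r q : ℕ) :
    #(disjointPairs ι r q) = (Fintype.card ι).choose r * (Fintype.card ι - r).choose q := by
  rw [disjointPairs, Finset.card_sigma,
    Finset.sum_const_nat (m := (Fintype.card ι - r).choose q) fun A hA => ?_,
    Finset.card_powersetCard, Finset.card_univ]
  rw [Finset.card_powersetCard, Finset.card_compl, (Finset.mem_powersetCard.1 hA).2]

lemma setOf_ncard_preimage_eq_and_ncard_preimage_eq (hST : Disjoint S T) (r q : ℕ) :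
    {X : ι → α | (X ⁻¹' S).ncard = r ∧ (X ⁻¹' T).ncard = q} =
      ⋃ p ∈ disjointPairs ι r q, {X | X ⁻¹' S = p.1 ∧ X ⁻¹' T = p.2} := by
  ext X
  simp only [Set.mem_ofPred_eq, Set.mem_iUnion, mem_disjointPairs, exists_prop]
  constructor
  · rintro ⟨hr, hq⟩
    obtain ⟨A, hA⟩ := (X ⁻¹' S).toFinite.exists_finset_coe
    obtain ⟨B, hB⟩ := (X ⁻¹' T).toFinite.exists_finset_coe
    have hAB : Disjoint A B := by
      rw [← Finset.disjoint_coe, hA, hB]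
      exact hST.preimage X
    rw [← hA, Set.ncard_coe_finset] at hr
    rw [← hB, Set.ncard_coe_finset] at hq
    exact ⟨⟨A, B⟩, ⟨hr, hq, hAB⟩, hA.symm, hB.symm⟩
  · rintro ⟨p, ⟨hr, hq, -⟩, hA, hB⟩
    rw [hA, hB, Set.ncard_coe_finset, Set.ncard_coe_finset]
    exact ⟨hr, hq⟩

variable [MeasurableSpace α] (ν : Measure α) [IsFiniteMeasure ν]

omit [DecidableEq ι] in
lemma pi_real_preimage_eq_and_preimage_eq (hST : Disjoint S T) (hAB : Disjoint A B) :
    (Measure.pi fun _ : ι => ν).real {X | X ⁻¹' S = A ∧ X ⁻¹' T = B} =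
      ν.real S ^ #A * ν.real T ^ #B * ν.real (S ∪ T)ᶜ ^ (Fintype.card ι - #A - #B) := by
  classical
  have B_eq : ({s | s ∉ A ∧ s ∈ B} : Finset ι) = B := by
    grind [Finset.disjoint_left]
  have rest_eq : ({s | s ∉ A ∧ s ∉ B} : Finset ι) = (A ∪ B)ᶜ := by
    ext; simp
  rw [setOf_preimage_eq_and_preimage_eq hST hAB, measureReal_def, Measure.pi_pi,
    ENNReal.toReal_prod]
  simp only [← measureReal_def, apply_ite ν.real, Finset.prod_ite, Finset.prod_const,
    Finset.filter_filter, Finset.filter_univ_mem, B_eq, rest_eq, Finset.card_compl,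
    Finset.card_union_of_disjoint hAB, Nat.sub_sub, mul_assoc]

omit [DecidableEq ι] in
lemma pi_real_ncard_preimage_eq_and_ncard_preimage_eq (hS : MeasurableSet S)
    (hT : MeasurableSet T) (hST : Disjoint S T) (r q : ℕ) :
    (Measure.pi fun _ : ι => ν).real {X | (X ⁻¹' S).ncard = r ∧ (X ⁻¹' T).ncard = q} =
      (Fintype.card ι).choose r * (Fintype.card ι - r).choose q *
        (ν.real S ^ r * ν.real T ^ q * ν.real (S ∪ T)ᶜ ^ (Fintype.card ι - r - q)) := by
  classical
  have pairwise_disjoint : (disjointPairs ι r q : Set (Σ _ : Finset ι, Finset ι)).PairwiseDisjoint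
      fun p => {X : ι → α | X ⁻¹' S = p.1 ∧ X ⁻¹' T = p.2} := by
    rintro ⟨A, B⟩ - ⟨A', B'⟩ - hne
    refine Set.disjoint_left.2 fun X ⟨hA, hB⟩ ⟨hA', hB'⟩ => hne ?_
    obtain rfl : A = A' := Finset.coe_injective (hA.symm.trans hA')
    obtain rfl : B = B' := Finset.coe_injective (hB.symm.trans hB')
    rfl
  rw [setOf_ncard_preimage_eq_and_ncard_preimage_eq hST,
    measureReal_biUnion_finset pairwise_disjoint]
  · rw [← Nat.cast_mul, ← card_disjointPairs, ← nsmul_eq_mul]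
    refine Finset.sum_eq_card_nsmul fun p hp => ?_
    obtain ⟨hr, hq, hAB⟩ := mem_disjointPairs.1 hp
    rw [pi_real_preimage_eq_and_preimage_eq ν hST hAB, hr, hq]
  · intro p hp
    rw [setOf_preimage_eq_and_preimage_eq hST (mem_disjointPairs.1 hp).2.2]
    refine MeasurableSet.univ_pi fun s => ?_
    split_ifs
    exacts [hS, hT, (hS.union hT).compl]

end Trinomial

lemma one_sub_two_mul_pow_le {x : ℝ} (hx₀ : 0 ≤ x) (hx : x ≤ 1 / 2) {m r k : ℕ} (hk : k ≤ m + r) :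
    (1 - 2 * x) ^ m ≤ 4 ^ r * ((1 - x) ^ k * (1 - x) ^ k) := by
  calc (1 - 2 * x) ^ m
      ≤ ((1 - x) ^ 2) ^ m := by gcongr <;> nlinarith
    _ ≤ (4 * (1 - x) ^ 2) ^ r * ((1 - x) ^ 2) ^ m :=
        le_mul_of_one_le_left (by positivity) (one_le_pow₀ (by nlinarith))
    _ = 4 ^ r * ((1 - x) ^ (m + r) * (1 - x) ^ (m + r)) := by
        generalize 1 - x = y
        ring
    _ ≤ 4 ^ r * ((1 - x) ^ k * (1 - x) ^ k) := by
        have : (1 - x) ^ (m + r) ≤ (1 - x) ^ k :=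
          pow_le_pow_of_le_one (by linarith) (by linarith) hk
        have : 0 ≤ 1 - x := by linarith
        gcongr

section OccupancyProbabilities

/-- The uniform probability law on `N` boxes, i.e. the law of the position of a single ball. -/
noncomputable def uniformBox (N : ℕ) : Measure (Fin N) :=
  (N : ENNReal)⁻¹ • Measure.count

/-- The event that box `i` contains exactly `r` of the `n` balls. -/
def boxHolds {n N : ℕ} (r : ℕ) (i : Fin N) : Set (Fin n → Fin N) :=
  {X | (X ⁻¹' {i}).ncard = r}

/-- The mean `𝔼 μ_r(n,N)`, written by linearity as a sum over the boxes. -/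
noncomputable def expectedBoxCount (n N r : ℕ) : ℝ :=
  ∑ i : Fin N, (ballsInBoxes n N).real (boxHolds r i)

variable {n N : ℕ}

lemma uniformBox_real_singleton (i : Fin N) : (uniformBox N).real {i} = 1 / N := by
  simp [uniformBox, measureReal_def]

variable (n N) in
lemma boxCountProb_one_eq (r : ℕ) :
    boxCountProb n N r 1 = (ballsInBoxes n N).real {X | ∃! i, X ∈ boxHolds r i} := by
  rw [boxCountProb, ← measureReal_def]
  congr 1
  ext X
  classical
  rw [Set.mem_ofPred_eq, Set.mem_ofPred_eq, Fintype.existsUnique_iff_card_one]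
  simp only [boxHolds, Set.mem_ofPred_eq, Set.ncard_eq_toFinset_card', Set.toFinset_ofPred,
    Set.preimage, Set.mem_singleton_iff]

variable [NeZero N]

instance : IsProbabilityMeasure (uniformBox N) where
  measure_univ := by
    simp [uniformBox, ENNReal.inv_mul_cancel (Nat.cast_ne_zero.2 (NeZero.ne N))]

instance : IsProbabilityMeasure (ballsInBoxes n N) :=
  inferInstanceAs (IsProbabilityMeasure (Measure.pi fun _ : Fin n => uniformBox N))

lemma ballsInBoxes_real_boxHolds_inter (r : ℕ) {i j : Fin N} (hij : i ≠ j) :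
    (ballsInBoxes n N).real (boxHolds r i ∩ boxHolds r j) =
      n.choose r * (n - r).choose r *
        ((1 / N) ^ r * (1 / N) ^ r * (1 - 2 * (1 / N)) ^ (n - r - r) : ℝ) := by
  have union_compl : (uniformBox N).real ({i} ∪ {j})ᶜ = 1 - 2 * (1 / N) := by
    rw [probReal_compl_eq_one_sub .of_discrete,
      measureReal_union (Set.disjoint_singleton.2 hij) .of_discrete,
      uniformBox_real_singleton, uniformBox_real_singleton, two_mul]
  have trinomial := pi_real_ncard_preimage_eq_and_ncard_preimage_eq (ι := Fin n) (uniformBox N)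
    (measurableSet_singleton i) (measurableSet_singleton j) (Set.disjoint_singleton.2 hij) r r
  rwa [union_compl, uniformBox_real_singleton, uniformBox_real_singleton,
    Fintype.card_fin] at trinomial

lemma ballsInBoxes_real_boxHolds (r : ℕ) (i : Fin N) :
    (ballsInBoxes n N).real (boxHolds r i) =
      n.choose r * ((1 / N) ^ r * (1 - 1 / N) ^ (n - r) : ℝ) := by
  have binomial := pi_real_ncard_preimage_eq_and_ncard_preimage_eq (ι := Fin n) (uniformBox N)
    (measurableSet_singleton i) MeasurableSet.empty (Set.disjoint_empty _) r 0
  simp only [Set.preimage_empty, Set.ncard_empty, and_true, Set.union_empty, Nat.choose_zero_right,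
    Nat.cast_one, mul_one, pow_zero, Nat.sub_zero, Fintype.card_fin, uniformBox_real_singleton,
    probReal_compl_eq_one_sub (measurableSet_singleton i)] at binomial
  exact binomial

variable (n N) in
lemma expectedBoxCount_eq (r : ℕ) :
    expectedBoxCount n N r =
      N * (n.choose r * ((1 / N) ^ r * (1 - 1 / N) ^ (n - r)) : ℝ) := by
  simp only [expectedBoxCount, ballsInBoxes_real_boxHolds, Finset.sum_const, Finset.card_univ,
    Fintype.card_fin, nsmul_eq_mul]

lemma ballsInBoxes_real_boxHolds_inter_le (r : ℕ) {i j : Fin N} (hij : i ≠ j) :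
    (ballsInBoxes n N).real (boxHolds r i ∩ boxHolds r j) ≤
      4 ^ r * ((ballsInBoxes n N).real (boxHolds r i) *
        (ballsInBoxes n N).real (boxHolds r j)) := by
  have two_le : (2 : ℝ) ≤ N := by
    have : 2 ≤ N := by omega
    exact_mod_cast this
  have hx : (1 / N : ℝ) ≤ 1 / 2 := one_div_le_one_div_of_le two_pos two_le
  have base_nonneg : (0 : ℝ) ≤ 1 - 2 * (1 / N) := by linarith
  have choose_le : ((n - r).choose r : ℝ) ≤ n.choose r :=
    mod_cast Nat.choose_le_choose r (Nat.sub_le n r)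
  have pow_le : (1 - 2 * (1 / N) : ℝ) ^ (n - r - r) ≤
      4 ^ r * ((1 - 1 / N) ^ (n - r) * (1 - 1 / N) ^ (n - r)) :=
    one_sub_two_mul_pow_le (by positivity) hx (by omega)
  rw [ballsInBoxes_real_boxHolds_inter r hij, ballsInBoxes_real_boxHolds,
    ballsInBoxes_real_boxHolds]
  calc _ ≤ (n.choose r * n.choose r * ((1 / N) ^ r * (1 / N) ^ r *
          (4 ^ r * ((1 - 1 / N) ^ (n - r) * (1 - 1 / N) ^ (n - r)))) : ℝ) := by
        gcongr
    _ = _ := by ring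

variable (n N) in
lemma abs_boxCountProb_one_sub_expectedBoxCount_le (r : ℕ) :
    |boxCountProb n N r 1 - expectedBoxCount n N r| ≤ 4 ^ r * expectedBoxCount n N r ^ 2 := by
  have upper : boxCountProb n N r 1 ≤ expectedBoxCount n N r := by
    rw [boxCountProb_one_eq]
    exact measureReal_existsUnique_mem_le _ _
  have lower : expectedBoxCount n N r ≤ boxCountProb n N r 1 + 4 ^ r * expectedBoxCount n N r ^ 2 :=
    calc expectedBoxCount n N r
        ≤ boxCountProb n N r 1 +
            ∑ i, ∑ j ∈ {i}ᶜ, (ballsInBoxes n N).real (boxHolds r i ∩ boxHolds r j) := by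
          rw [boxCountProb_one_eq]
          exact sum_measureReal_le_existsUnique_mem_add _ fun _ => .of_discrete
      _ ≤ boxCountProb n N r 1 + ∑ i, ∑ j, 4 ^ r * ((ballsInBoxes n N).real (boxHolds r i) *
            (ballsInBoxes n N).real (boxHolds r j)) := by
          gcongr with i
          refine (Finset.sum_le_sum fun j hj => ballsInBoxes_real_boxHolds_inter_le r ?_).trans
            (Finset.sum_le_univ_sum_of_nonneg fun j => by positivity)
          simpa [eq_comm] using hj
      _ = boxCountProb n N r 1 + 4 ^ r * expectedBoxCount n N r ^ 2 := by
          simp only [expectedBoxCount, ← Finset.mul_sum, sq, Finset.sum_mul_sum]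
  rw [abs_sub_comm, abs_of_nonneg (sub_nonneg.2 upper)]
  linarith

end OccupancyProbabilities

section Asymptotics

variable {κ : Type*} {l : Filter κ}

lemma one_sub_mul_sq_le_one_sub_pow_mul_exp {x : ℝ} (hx : |x| ≤ 1) (n : ℕ) :
    1 - n * x ^ 2 ≤ (1 - x) ^ n * Real.exp (n * x) := by
  obtain ⟨hx₁, hx₂⟩ := abs_le.1 hx
  calc 1 - n * x ^ 2
      = 1 + n * (-x ^ 2) := by ring
    _ ≤ (1 + -x ^ 2) ^ n := one_add_mul_le_pow (by nlinarith) n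
    _ ≤ ((1 - x) * Real.exp x) ^ n := by
        gcongr
        · nlinarith
        · nlinarith [Real.add_one_le_exp x]
    _ = (1 - x) ^ n * Real.exp (n * x) := by rw [mul_pow, Real.exp_nat_mul]

lemma one_sub_pow_mul_exp_le_one {x : ℝ} (hx : x ≤ 1) (n : ℕ) :
    (1 - x) ^ n * Real.exp (n * x) ≤ 1 := by
  rw [Real.exp_nat_mul, ← mul_pow]
  refine pow_le_one₀ (mul_nonneg (sub_nonneg.2 hx) (Real.exp_pos x).le) ?_
  calc (1 - x) * Real.exp x
      ≤ Real.exp (-x) * Real.exp x := by gcongr; exact Real.one_sub_le_exp_neg x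
    _ = 1 := by rw [← Real.exp_add, neg_add_cancel, Real.exp_zero]

lemma isEquivalent_one_sub_pow_exp {x : κ → ℝ} {n : κ → ℕ} (hx : Tendsto x l (𝓝 0))
    (hnx : Tendsto (fun k => n k * x k ^ 2) l (𝓝 0)) :
    (fun k => (1 - x k) ^ n k) ~[l] fun k => Real.exp (-(n k * x k)) := by
  have abs_le_one : ∀ᶠ k in l, |x k| ≤ 1 :=
    hx.abs.eventually_le_const (by simp)
  refine (isEquivalent_iff_tendsto_one (.of_forall fun k => (Real.exp_pos _).ne')).2 ?_
  refine Tendsto.congr (fun k => ?_) (f₁ := fun k => (1 - x k) ^ n k * Real.exp (n k * x k)) ?_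
  · rw [Pi.div_apply, Real.exp_neg, div_inv_eq_mul]
  refine tendsto_of_tendsto_of_tendsto_of_le_of_le' (by simpa using hnx.const_sub 1)
    tendsto_const_nhds ?_ ?_
  · exact abs_le_one.mono fun k hk => one_sub_mul_sq_le_one_sub_pow_mul_exp hk _
  · exact abs_le_one.mono fun k hk => one_sub_pow_mul_exp_le_one (abs_le.1 hk).2 _

lemma isEquivalent_one_sub_pow_sub (r : ℕ) {x : κ → ℝ} {n : κ → ℕ} (hx : Tendsto x l (𝓝 0))
    (hn : ∀ᶠ k in l, r ≤ n k) :
    (fun k => (1 - x k) ^ (n k - r)) ~[l] fun k => (1 - x k) ^ n k := by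
  have pow_r : (fun k => (1 - x k) ^ r) ~[l] fun _ => (1 : ℝ) :=
    (isEquivalent_const_iff_tendsto one_ne_zero).2 (by simpa using (hx.const_sub 1).pow r)
  have mul_pow_r := (IsEquivalent.refl (u := fun k => (1 - x k) ^ (n k - r))).mul pow_r.symm
  refine (mul_pow_r.congr_left (.of_forall fun k => mul_one _)).congr_right ?_
  filter_upwards [hn] with k hk using pow_sub_mul_pow _ hk

lemma isEquivalent_boxCountProb_one {n N : κ → ℕ} {r : ℕ} (hN : ∀ᶠ k in l, N k ≠ 0)
    (hE : Tendsto (fun k => expectedBoxCount (n k) (N k) r) l (𝓝 0)) :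
    (fun k => boxCountProb (n k) (N k) r 1) ~[l] fun k => expectedBoxCount (n k) (N k) r := by
  have sq_isLittleO : (fun k => expectedBoxCount (n k) (N k) r ^ 2) =o[l]
      fun k => expectedBoxCount (n k) (N k) r := by
    simpa only [sq, one_mul] using ((isLittleO_one_iff ℝ).2 hE).mul_isBigO (isBigO_refl _ l)
  refine IsBigO.trans_isLittleO (.of_bound (4 ^ r) (hN.mono fun k hk => ?_)) sq_isLittleO
  have : NeZero (N k) := ⟨hk⟩
  simpa using abs_boxCountProb_one_sub_expectedBoxCount_le (n k) (N k) r

lemma isEquivalent_expectedBoxCount (r : ℕ) {n N : κ → ℕ} (hn : Tendsto n l atTop)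
    (hN : Tendsto N l atTop) (hnN : Tendsto (fun k => (n k : ℝ) / N k ^ 2) l (𝓝 0)) :
    (fun k => expectedBoxCount (n k) (N k) r) ~[l] fun k =>
      (N k : ℝ) * (((n k : ℝ) / N k) ^ r * Real.exp (-((n k : ℝ) / N k)) / r.factorial) := by
  have inv_tendsto : Tendsto (fun k => 1 / (N k : ℝ)) l (𝓝 0) :=
    tendsto_const_nhds.div_atTop (tendsto_natCast_atTop_atTop.comp hN)
  have choose_equiv : (fun k => ((n k).choose r : ℝ)) ~[l] fun k => (n k : ℝ) ^ r / r.factorial :=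
    (isEquivalent_choose r).comp_tendsto hn
  have pow_equiv : (fun k => (1 - 1 / (N k : ℝ)) ^ (n k - r)) ~[l]
      fun k => Real.exp (-(n k * (1 / (N k : ℝ)))) :=
    (isEquivalent_one_sub_pow_sub r inv_tendsto (hn.eventually_ge_atTop r)).trans
      (isEquivalent_one_sub_pow_exp inv_tendsto (by simpa [div_eq_mul_inv] using hnN))
  have product_equiv := (IsEquivalent.refl (u := fun k => (N k : ℝ))).mul
    (choose_equiv.mul ((IsEquivalent.refl (u := fun k => (1 / (N k : ℝ)) ^ r)).mul pow_equiv))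
  refine (product_equiv.congr_left ?_).congr_right (.of_forall fun k => ?_)
  · filter_upwards [hN.eventually_ne_atTop 0] with k hk
    have : NeZero (N k) := ⟨hk⟩
    exact (expectedBoxCount_eq (n k) (N k) r).symm
  · simp only [Pi.mul_apply]
    rw [mul_one_div]
    ring

end Asymptotics

theorem boxCountProb_one_asymptotic_general {κ : Type*} {l : Filter κ} (r : ℕ) (n N : κ → ℕ)
    (hn : Tendsto n l atTop) (hN : Tendsto N l atTop)
    (hnN : Tendsto (fun k => (n k : ℝ) / (N k : ℝ) ^ 2) l (𝓝 0))
    (hNp : Tendsto (fun k => (N k : ℝ) *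
        (((n k : ℝ) / (N k : ℝ)) ^ r * Real.exp (-((n k : ℝ) / (N k : ℝ))) / r.factorial))
      l (𝓝 0)) :
    Tendsto (fun k => boxCountProb (n k) (N k) r 1 /
        ((N k : ℝ) *
          (((n k : ℝ) / (N k : ℝ)) ^ r * Real.exp (-((n k : ℝ) / (N k : ℝ))) / r.factorial)))
      l (𝓝 1) := by
  have mean_equiv := isEquivalent_expectedBoxCount r hn hN hnN
  have prob_equiv := isEquivalent_boxCountProb_one (hN.eventually_ne_atTop 0)
    (mean_equiv.symm.tendsto_nhds hNp)
  refine (isEquivalent_iff_tendsto_one ?_).1 (prob_equiv.trans mean_equiv)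
  filter_upwards [hn.eventually_gt_atTop 0, hN.eventually_gt_atTop 0] with k hnk hNk
  positivity

/-- For fixed `r ≥ 2`, if `n_k, N_k → ∞`, `α_k := n_k/N_k → 0` and
`N_k·p_{r,k} → 0` where `p_{r,k} := α_k^r e^{-α_k}/r!`, then
`ℙ(μ_r(n_k,N_k) = 1)/(N_k·p_{r,k}) → 1`. -/
theorem boxCountProb_one_asymptotic (r : ℕ) (hr : 2 ≤ r) (n N : ℕ → ℕ)
    (hn1 : ∀ k, 1 ≤ n k) (hN1 : ∀ k, 1 ≤ N k)
    (hn : Tendsto (fun k => (n k : ℝ)) atTop atTop)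
    (hN : Tendsto (fun k => (N k : ℝ)) atTop atTop)
    (hα : Tendsto (fun k => (n k : ℝ) / (N k : ℝ)) atTop (nhds 0))
    (hNp : Tendsto (fun k => (N k : ℝ) *
        (((n k : ℝ) / (N k : ℝ)) ^ r * Real.exp (-((n k : ℝ) / (N k : ℝ))) / r.factorial))
      atTop (nhds 0)) :
    Tendsto (fun k => boxCountProb (n k) (N k) r 1 /
        ((N k : ℝ) *
          (((n k : ℝ) / (N k : ℝ)) ^ r * Real.exp (-((n k : ℝ) / (N k : ℝ))) / r.factorial)))
      atTop (nhds 1) := by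
  refine boxCountProb_one_asymptotic_general r n N (tendsto_natCast_atTop_iff.1 hn)
    (tendsto_natCast_atTop_iff.1 hN) ?_ hNp
  simpa [div_div, ← sq] using hα.div_atTop hN
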